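/- Let γ=(B,M,S,A,Â) be a market with middlemen and γ*=(B,S,A*) the associated two-sided assignment market. If (x;z)∈Core(w_{γ*}), then the augmented payoff vector (x;0;z)∈R^B×R^M×R^S, which gives every middleman payoff zero, belongs to Core(v_γ). -/

import Mathlib

/-!
Matching markets with middlemen (Atay, Bahel, Solymosi).

Players are of three sorts: buyers `B`, middlemen `M`, sellers `S`
(three disjoint nonempty finite types); the player set is `Player B M S = B ⊕ M ⊕ S`.
An (functional representation of a) `T`-matching assigns to each buyer either nothing
(the buyer is single), a seller (direct trade), or a middleman together with a seller
(mediated trade); distinct buyers get distinct sellers, and all agents involved lie in `T`.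
A middleman may mediate several trades.
-/

open scoped Classical

noncomputable section

/-- The set of players of a market with middlemen: buyers `B`, middlemen `M`, sellers `S`. -/
abbrev Player (B M S : Type*) := B ⊕ M ⊕ S

/-- Functional representation of a matching in the market with middlemen: each buyer is
unmatched (`none`), matched directly to a seller (`some (none, k)`), or matched to a seller
through a middleman (`some (some j, k)`). -/
abbrev MMatch (B M S : Type*) := B → Option (Option M × S)

namespace Middlemen

variable {B M S : Type*}

/-- A buyer as a player. -/
def buyer (i : B) : Player B M S := Sum.inl i

/-- A middleman as a player. -/
def mid (j : M) : Player B M S := Sum.inr (Sum.inl j)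

/-- A seller as a player. -/
def seller (k : S) : Player B M S := Sum.inr (Sum.inr k)

/-- `f` is a `T`-matching in the market with middlemen: every basic coalition used by `f`
is contained in `T` and no seller is matched to two distinct buyers.  (Buyers, middlemen
and sellers of `T` not appearing in any trade are singletons of the matching.) -/
def IsMatching (T : Finset (Player B M S)) (f : MMatch B M S) : Prop :=
  (∀ i o k, f i = some (o, k) →
      buyer i ∈ T ∧ seller k ∈ T ∧ ∀ j, o = some j → mid j ∈ T) ∧
  (∀ i i' o o' k, f i = some (o, k) → f i' = some (o', k) → i = i')

variable [Fintype B] [Fintype M] [Fintype S]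

/-- The value `Σ_{(i,k)∈μ} a_{ik} + Σ_{(i,j,k)∈μ} â_{ijk}` of a matching in the market
with middlemen with direct-trade surplus matrix `A` and mediated-trade surpluses `Ah`. -/
def mval (A : B → S → ℝ) (Ah : B → M → S → ℝ) (f : MMatch B M S) : ℝ :=
  ∑ i, (match f i with
    | none => 0
    | some (none, k) => A i k
    | some (some j, k) => Ah i j k)

/-- The TU game `v_γ` associated with the market with middlemen `γ = (B,M,S,A,Ah)`:
the worth of a coalition `T` is the maximal value of a `T`-matching. -/
def vGame (A : B → S → ℝ) (Ah : B → M → S → ℝ) (T : Finset (Player B M S)) : ℝ :=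
  sSup { r | ∃ f : MMatch B M S, IsMatching T f ∧ r = mval A Ah f }

/-- `g` is a matching of the coalition `R` in a two-sided assignment market. -/
def IsMatching2 (R : Finset (B ⊕ S)) (g : B → Option S) : Prop :=
  (∀ i k, g i = some k → Sum.inl i ∈ R ∧ Sum.inr k ∈ R) ∧
  (∀ i i' k, g i = some k → g i' = some k → i = i')

/-- The value of a two-sided matching with valuation matrix `As`. -/
def m2val (As : B → S → ℝ) (g : B → Option S) : ℝ :=
  ∑ i, (match g i with
    | none => 0
    | some k => As i k)

/-- The assignment game `w_{γ*}` of the two-sided assignment market `(B,S,As)`. -/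
def wGame (As : B → S → ℝ) (R : Finset (B ⊕ S)) : ℝ :=
  sSup { r | ∃ g : B → Option S, IsMatching2 R g ∧ r = m2val As g }

/-- The matrix `A*` of the associated two-sided assignment market:
`a*_{ik} = max_{j ∈ M} â_{ijk}`. -/
def Astar [Nonempty M] (Ah : B → M → S → ℝ) (i : B) (k : S) : ℝ :=
  Finset.univ.sup' Finset.univ_nonempty fun j => Ah i j k

/-- The two-sided matching `μ*` induced by a matching `μ` of the market with middlemen:
keep all matched buyer–seller pairs (dropping the middlemen). -/
def star (f : MMatch B M S) : B → Option S := fun i => (f i).map Prod.snd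

/-- `m(i,k)`: the lowest-indexed middleman `j` maximizing `â_{ijk}`. -/
def bestMid [Nonempty M] [LinearOrder M] (Ah : B → M → S → ℝ) (i : B) (k : S) : M :=
  (Finset.univ.filter fun j => ∀ j' : M, Ah i j' k ≤ Ah i j k).min' (by
    obtain ⟨j, -, hj⟩ := Finset.exists_max_image (Finset.univ : Finset M)
      (fun j => Ah i j k) Finset.univ_nonempty
    exact ⟨j, Finset.mem_filter.mpr ⟨Finset.mem_univ _, fun j' => hj j' (Finset.mem_univ _)⟩⟩)

/-- The matching `σ^△` of the market with middlemen induced by a two-sided matching `σ`: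
each matched pair `{i,k}` of `σ` trades through the best middleman `m(i,k)`
(and every other middleman is a singleton). -/
def triangle [Nonempty M] [LinearOrder M] (Ah : B → M → S → ℝ) (g : B → Option S) :
    MMatch B M S :=
  fun i => (g i).map fun k => (some (bestMid Ah i k), k)

/-- The core of a TU game on the finite player set `P`. -/
def core {P : Type*} [Fintype P] (v : Finset P → ℝ) : Set (P → ℝ) :=
  { x | ∑ t, x t = v Finset.univ ∧ ∀ T : Finset P, v T ≤ ∑ t ∈ T, x t }

/-- Augment a payoff vector of the two-sided market with zero payoffs to all middlemen. -/
def aug (xz : B ⊕ S → ℝ) : Player B M S → ℝ := fun t =>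
  match t with
  | Sum.inl i => xz (Sum.inl i)
  | Sum.inr (Sum.inl _) => 0
  | Sum.inr (Sum.inr k) => xz (Sum.inr k)

/-- Restrict a payoff vector of the market with middlemen to the buyers and sellers. -/
def restrictBS (X : Player B M S → ℝ) : B ⊕ S → ℝ := fun t =>
  match t with
  | Sum.inl i => X (buyer i)
  | Sum.inr k => X (seller k)

/-- The set `T ∩ (B ∪ S)` of buyers and sellers of a coalition `T`. -/
def bsPart (T : Finset (Player B M S)) : Finset (B ⊕ S) :=
  Finset.univ.filter fun t =>
    match t with
    | Sum.inl i => buyer i ∈ T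
    | Sum.inr k => (seller k : Player B M S) ∈ T

/-- The coalition `R ∪ M` consisting of the buyers and sellers of `R` together with
all middlemen. -/
def withAllMid (R : Finset (B ⊕ S)) : Finset (Player B M S) :=
  Finset.univ.filter fun t =>
    match t with
    | Sum.inl i => Sum.inl i ∈ R
    | Sum.inr (Sum.inl _) => True
    | Sum.inr (Sum.inr k) => Sum.inr k ∈ R

end Middlemen

namespace Middlemen

/-!
Forgetting the middlemen of a `T`-matching yields a two-sided matching of `T ∩ (B ∪ S)` that is
worth at least as much under `A*`, so `v_γ(T) ≤ w_γ*(T ∩ (B ∪ S))`. Conversely, letting every pair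
of a two-sided matching trade through its best middleman preserves its value, so equality holds
as soon as `T` contains all middlemen. Since middlemen are paid nothing, `(x;0;z)` gives to `T`
exactly what `(x;z)` gives to `T ∩ (B ∪ S)`, and the core conditions carry over.
-/

section Augmentation

variable {B M S : Type*} [Fintype B] [Fintype S]

@[simp]
theorem inl_mem_bsPart {T : Finset (Player B M S)} {i : B} :
    Sum.inl i ∈ bsPart T ↔ buyer i ∈ T := by
  simp only [bsPart, Finset.mem_filter_univ]

@[simp]
theorem inr_mem_bsPart {T : Finset (Player B M S)} {k : S} :
    Sum.inr k ∈ bsPart T ↔ seller k ∈ T := by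
  simp only [bsPart, Finset.mem_filter_univ]

theorem bsPart_eq_disjSum (T : Finset (Player B M S)) :
    bsPart T = T.toLeft.disjSum T.toRight.toRight := by
  ext (i | k) <;> simp [buyer, seller]

theorem bsPart_univ [Fintype M] : bsPart (Finset.univ : Finset (Player B M S)) = Finset.univ := by
  ext (i | k) <;> simp

theorem sum_aug (xz : B ⊕ S → ℝ) (T : Finset (Player B M S)) :
    ∑ t ∈ T, aug xz t = ∑ t ∈ bsPart T, xz t := by
  rw [bsPart_eq_disjSum, Finset.sum_disjSum]
  simp [Finset.sum_sum_eq_sum_toLeft_add_sum_toRight, aug]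

end Augmentation

section Worth

variable {B M S : Type*} [Fintype B]

theorem mval_le_vGame [Finite M] [Finite S] (A : B → S → ℝ) (Ah : B → M → S → ℝ)
    {T : Finset (Player B M S)} {f : MMatch B M S} (hf : IsMatching T f) :
    mval A Ah f ≤ vGame A Ah T := by
  have hfinite : {r | ∃ f, IsMatching T f ∧ r = mval A Ah f}.Finite :=
    (Set.finite_range (mval A Ah)).subset fun _ ⟨f, _, hr⟩ => ⟨f, hr.symm⟩
  exact le_csSup hfinite.bddAbove ⟨f, hf, rfl⟩

theorem vGame_le {A : B → S → ℝ} {Ah : B → M → S → ℝ} {T : Finset (Player B M S)} {c : ℝ}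
    (h : ∀ f, IsMatching T f → mval A Ah f ≤ c) : vGame A Ah T ≤ c := by
  refine csSup_le ⟨_, fun _ => none, by simp [IsMatching], rfl⟩ ?_
  rintro _ ⟨f, hf, rfl⟩
  exact h f hf

theorem m2val_le_wGame [Finite S] (As : B → S → ℝ) {R : Finset (B ⊕ S)} {g : B → Option S}
    (hg : IsMatching2 R g) : m2val As g ≤ wGame As R := by
  have hfinite : {r | ∃ g, IsMatching2 R g ∧ r = m2val As g}.Finite :=
    (Set.finite_range (m2val As)).subset fun _ ⟨g, _, hr⟩ => ⟨g, hr.symm⟩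
  exact le_csSup hfinite.bddAbove ⟨g, hg, rfl⟩

theorem wGame_le {As : B → S → ℝ} {R : Finset (B ⊕ S)} {c : ℝ}
    (h : ∀ g, IsMatching2 R g → m2val As g ≤ c) : wGame As R ≤ c := by
  refine csSup_le ⟨_, fun _ => none, by simp [IsMatching2], rfl⟩ ?_
  rintro _ ⟨g, hg, rfl⟩
  exact h g hg

end Worth

section ForgetMiddlemen

variable {B M S : Type*}

theorem IsMatching.star [Fintype B] [Fintype S] {T : Finset (Player B M S)} {f : MMatch B M S}
    (hf : IsMatching T f) : IsMatching2 (bsPart T) (star f) := by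
  constructor
  · intro i k hik
    obtain ⟨⟨o, _⟩, hfi, rfl⟩ := Option.map_eq_some_iff.mp hik
    obtain ⟨hi, hk, -⟩ := hf.1 i o _ hfi
    exact ⟨inl_mem_bsPart.mpr hi, inr_mem_bsPart.mpr hk⟩
  · intro i i' k hik hi'k
    obtain ⟨⟨o, _⟩, hfi, rfl⟩ := Option.map_eq_some_iff.mp hik
    obtain ⟨⟨o', _⟩, hfi', rfl⟩ := Option.map_eq_some_iff.mp hi'k
    exact hf.2 i i' o o' _ hfi hfi'

theorem le_Astar [Fintype M] [Nonempty M] (Ah : B → M → S → ℝ) (i : B) (j : M) (k : S) :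
    Ah i j k ≤ Astar Ah i k :=
  Finset.le_sup' (fun j => Ah i j k) (Finset.mem_univ j)

theorem mval_le_m2val_star [Fintype B] {A As : B → S → ℝ} {Ah : B → M → S → ℝ}
    (hA : ∀ i k, A i k ≤ As i k) (hAh : ∀ i j k, Ah i j k ≤ As i k) (f : MMatch B M S) :
    mval A Ah f ≤ m2val As (star f) := by
  refine Finset.sum_le_sum fun i _ => ?_
  rcases hfi : f i with _ | ⟨_ | j, k⟩
  · simp [star, hfi]
  · simpa [star, hfi] using hA i k
  · simpa [star, hfi] using hAh i j k

theorem vGame_le_wGame_bsPart [Fintype B] [Fintype S] {A As : B → S → ℝ} {Ah : B → M → S → ℝ}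
    (hA : ∀ i k, A i k ≤ As i k) (hAh : ∀ i j k, Ah i j k ≤ As i k) (T : Finset (Player B M S)) :
    vGame A Ah T ≤ wGame As (bsPart T) :=
  vGame_le fun f hf => (mval_le_m2val_star hA hAh f).trans (m2val_le_wGame As hf.star)

end ForgetMiddlemen

section BestMiddlemen

variable {B M S : Type*} [Fintype M] [Nonempty M]

theorem Ah_bestMid [LinearOrder M] (Ah : B → M → S → ℝ) (i : B) (k : S) :
    Ah i (bestMid Ah i k) k = Astar Ah i k := by
  have hmax : ∀ j, Ah i j k ≤ Ah i (bestMid Ah i k) k := by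
    have hmem := Finset.min'_mem (Finset.univ.filter fun j => ∀ j', Ah i j' k ≤ Ah i j k)
    exact (Finset.mem_filter.mp (hmem _)).2
  exact le_antisymm (le_Astar Ah i _ k) (Finset.sup'_le _ _ fun j _ => hmax j)

theorem IsMatching2.triangle [LinearOrder M] [Fintype B] [Fintype S] (Ah : B → M → S → ℝ)
    {T : Finset (Player B M S)} (hT : ∀ j, mid j ∈ T) {g : B → Option S}
    (hg : IsMatching2 (bsPart T) g) : IsMatching T (triangle Ah g) := by
  constructor
  · intro i o k hik
    obtain ⟨_, hgi, ⟨⟩⟩ := Option.map_eq_some_iff.mp hik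
    obtain ⟨hi, hk⟩ := hg.1 i k hgi
    exact ⟨inl_mem_bsPart.mp hi, inr_mem_bsPart.mp hk, fun j _ => hT j⟩
  · intro i i' o o' k hik hi'k
    obtain ⟨_, hgi, ⟨⟩⟩ := Option.map_eq_some_iff.mp hik
    obtain ⟨_, hgi', heq⟩ := Option.map_eq_some_iff.mp hi'k
    obtain ⟨-, rfl⟩ := Prod.mk.inj heq
    exact hg.2 i i' _ hgi hgi'

theorem mval_triangle [LinearOrder M] [Fintype B] (A : B → S → ℝ) (Ah : B → M → S → ℝ)
    (g : B → Option S) : mval A Ah (triangle Ah g) = m2val (Astar Ah) g := by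
  refine Finset.sum_congr rfl fun i _ => ?_
  rcases hgi : g i with _ | k
  · simp [triangle, hgi]
  · simp [triangle, hgi, Ah_bestMid]

theorem wGame_bsPart_le_vGame [Fintype B] [Fintype S] (A : B → S → ℝ) (Ah : B → M → S → ℝ)
    {T : Finset (Player B M S)} (hT : ∀ j, mid j ∈ T) :
    wGame (Astar Ah) (bsPart T) ≤ vGame A Ah T := by
  -- `bestMid` breaks ties by an order on `M`; any linear order will do.
  let _ : LinearOrder M := IsWellOrder.linearOrder WellOrderingRel
  exact wGame_le fun g hg =>
    (mval_triangle A Ah g).symm.trans_le (mval_le_vGame A Ah (hg.triangle Ah hT))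

end BestMiddlemen

theorem aug_mem_core_general
    {B M S : Type*} [Fintype B] [Fintype M] [Fintype S] [Nonempty M]
    (A : B → S → ℝ) (Ah : B → M → S → ℝ) (hA : ∀ i k, A i k ≤ Astar Ah i k)
    (xz : B ⊕ S → ℝ) (hxz : xz ∈ core (wGame (Astar Ah))) :
    (aug xz : Player B M S → ℝ) ∈ core (vGame A Ah) := by
  obtain ⟨hefficient, hstable⟩ := hxz
  have hle (T : Finset (Player B M S)) : vGame A Ah T ≤ wGame (Astar Ah) (bsPart T) :=
    vGame_le_wGame_bsPart hA (le_Astar Ah) T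
  have hgrand : wGame (Astar Ah) (bsPart Finset.univ) = vGame A Ah Finset.univ :=
    le_antisymm (wGame_bsPart_le_vGame A Ah fun _ => Finset.mem_univ _) (hle _)
  constructor
  · rw [sum_aug, ← hgrand, bsPart_univ, hefficient]
  · intro T
    calc vGame A Ah T ≤ wGame (Astar Ah) (bsPart T) := hle T
      _ ≤ ∑ t ∈ bsPart T, xz t := hstable _
      _ = ∑ t ∈ T, aug xz t := (sum_aug xz T).symm

/-- if `(x;z)` is in the core of the assignment game `w_γ*`, then the
augmented payoff vector `(x;0;z)` (zero payoff to every middleman) is in the core of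
the middlemen market game `v_γ`. -/
theorem aug_mem_core
    {B M S : Type*} [Fintype B] [Fintype M] [Fintype S]
    [Nonempty B] [Nonempty M] [Nonempty S]
    (A : B → S → ℝ) (Ah : B → M → S → ℝ)
    (hA : ∀ i k, 0 ≤ A i k) (hAh : ∀ i j k, A i k ≤ Ah i j k)
    (xz : B ⊕ S → ℝ) (hxz : xz ∈ core (wGame (Astar Ah))) :
    (aug xz : Player B M S → ℝ) ∈ core (vGame A Ah) := by
  exact aug_mem_core_general A Ah
    (fun i k => (hAh i (Classical.arbitrary M) k).trans (le_Astar Ah i _ k)) xz hxz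

end Middlemen
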